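/- arXiv:2308.13740 — 2 statements merged into one kernel-verified Lean document; each statement's English description precedes it below -/
import Mathlib

section
/- Let (X₁, X₂) be a centered Gaussian random vector where X₁ and X₂ are standard Gaussian with correlation ρ ∈ [-1,1], and let α₂, α₃ > 0. Then E[|X₁|^{α₂} |X₂|^{α₃}] = E[|X₁|^{α₂}] E[|X₂|^{α₃}] · F(-α₂/2, -α₃/2; 1/2; ρ²), where F is the Gauss hypergeometric function. -/
open MeasureTheory Matrix

noncomputable def risingFactorial (x : ℝ) (n : ℕ) : ℝ :=
  ∏ k ∈ Finset.range n, (x + k)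

noncomputable def gaussHypergeometric (a b c z : ℝ) : ℝ :=
  ∑' n : ℕ,
    risingFactorial a n * risingFactorial b n /
      (risingFactorial c n * (Nat.factorial n : ℝ)) * z ^ n

/-!
For `|ρ| < 1` the joint density contains the cross term `exp (t x y)` with `t = ρ / (1 - ρ²)`.
By symmetry it may be replaced by `cosh (t x y)`, whose power series integrates termwise to
`F((α₂ + 1) / 2, (α₃ + 1) / 2; 1 / 2; ρ²)`, and Euler's transformation turns this into
`F(-α₂ / 2, -α₃ / 2; 1 / 2; ρ²)`; its factor `(1 - z) ^ (c - a - b)` absorbs the powers of `1 - ρ²`.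
For `|ρ| = 1` one has `X₂ = ± X₁` almost surely, and the claim is Gauss's summation theorem at
`z = 1`. Gauss's theorem comes from iterating the contiguous relation `c ↦ c + 1`, whose boundary
term `n uₙ` vanishes in the limit because `∑ uₙ` converges by Raabe's test.
-/

section

open Filter Topology

/-! ## Gauss hypergeometric series -/

lemma risingFactorial_zero (x : ℝ) : risingFactorial x 0 = 1 :=
  Finset.prod_range_zero _

lemma risingFactorial_succ (x : ℝ) (n : ℕ) :
    risingFactorial x (n + 1) = risingFactorial x n * (x + n) :=
  Finset.prod_range_succ _ n

lemma risingFactorial_succ' (x : ℝ) (n : ℕ) :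
    risingFactorial x (n + 1) = x * risingFactorial (x + 1) n := by
  rw [risingFactorial, Finset.prod_range_succ', mul_comm, risingFactorial]
  push_cast
  simp only [add_zero, add_assoc, add_comm (1 : ℝ)]

lemma risingFactorial_pos {x : ℝ} (hx : 0 < x) (n : ℕ) : 0 < risingFactorial x n :=
  Finset.prod_pos fun _ _ => by positivity

lemma Gamma_add_natCast_eq_risingFactorial_mul {s : ℝ} (hs : ∀ m : ℕ, s ≠ -m) (n : ℕ) :
    Real.Gamma (s + n) = risingFactorial s n * Real.Gamma s := by
  induction n with
  | zero => simp [risingFactorial_zero]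
  | succ n ih =>
    have hsn : s + n ≠ 0 := fun h => hs n (eq_neg_of_add_eq_zero_left h)
    rw [Nat.cast_succ, ← add_assoc, Real.Gamma_add_one hsn, ih, risingFactorial_succ]
    ring

lemma factorial_two_mul_eq_risingFactorial (n : ℕ) :
    ((2 * n).factorial : ℝ) = 4 ^ n * (risingFactorial (1 / 2) n * n.factorial) := by
  induction n with
  | zero => simp [risingFactorial_zero]
  | succ n ih =>
    rw [mul_add_one, Nat.factorial_succ, Nat.factorial_succ, Nat.factorial_succ,
      risingFactorial_succ]
    push_cast
    rw [ih]
    ring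

lemma neg_natCast_ne_of_pos {x : ℝ} (hx : 0 < x) (m : ℕ) : x ≠ -m :=
  ((neg_nonpos.2 m.cast_nonneg).trans_lt hx).ne'

/-- The `n`-th coefficient of the power series of `z ↦ F(a, b; c; z)`. -/
noncomputable def hypergeometricCoeff (a b c : ℝ) (n : ℕ) : ℝ :=
  risingFactorial a n * risingFactorial b n / (risingFactorial c n * (n.factorial : ℝ))

lemma gaussHypergeometric_eq_tsum (a b c z : ℝ) :
    gaussHypergeometric a b c z = ∑' n, hypergeometricCoeff a b c n * z ^ n :=
  rfl

lemma hypergeometricCoeff_zero (a b c : ℝ) : hypergeometricCoeff a b c 0 = 1 := by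
  simp [hypergeometricCoeff, risingFactorial_zero]

lemma hypergeometricCoeff_succ (a b c : ℝ) (n : ℕ) :
    hypergeometricCoeff a b c (n + 1) =
      hypergeometricCoeff a b c n * ((a + n) * (b + n) / ((c + n) * (n + 1))) := by
  simp only [hypergeometricCoeff, risingFactorial_succ, Nat.factorial_succ]
  push_cast
  rw [div_mul_div_comm]
  congr 1 <;> ring

lemma hypergeometricCoeff_add_one (a b c : ℝ) (n : ℕ) (h0 : c ≠ 0) (hn : c + n ≠ 0) :
    hypergeometricCoeff a b (c + 1) n = hypergeometricCoeff a b c n * (c / (c + n)) := by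
  have h := (risingFactorial_succ' c n).symm.trans (risingFactorial_succ c n)
  have h1 : risingFactorial (c + 1) n = risingFactorial c n * ((c + n) / c) := by
    field_simp
    linarith
  simp only [hypergeometricCoeff, h1]
  rw [div_mul_div_comm, ← div_div_eq_mul_div]
  field_simp

lemma tendsto_natCast_add_div_natCast_add (x y : ℝ) :
    Tendsto (fun n : ℕ => (x + n) / (y + n)) atTop (𝓝 1) := by
  simpa using tendsto_add_mul_div_add_mul_atTop_nhds x y (1 : ℝ) one_ne_zero

lemma eventually_pos_add_natCast (x : ℝ) : ∀ᶠ n : ℕ in atTop, 0 < x + n :=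
  (tendsto_atTop_add_const_left _ x tendsto_natCast_atTop_atTop).eventually_gt_atTop 0

lemma summable_norm_hypergeometricCoeff_mul_pow (a b c : ℝ) {z : ℝ} (hz : |z| < 1) :
    Summable fun n => ‖hypergeometricCoeff a b c n * z ^ n‖ := by
  have ratio_tendsto :
      Tendsto (fun n : ℕ => |(a + n) * (b + n) / ((c + n) * (n + 1)) * z|) atTop (𝓝 |z|) := by
    have h := (((tendsto_natCast_add_div_natCast_add a c).mul
      (tendsto_natCast_add_div_natCast_add b 1)).mul_const z).abs
    simpa only [one_mul, div_mul_div_comm, add_comm (1 : ℝ)] using h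
  obtain ⟨r, hzr, hr⟩ := exists_between hz
  refine summable_of_ratio_norm_eventually_le hr ?_
  filter_upwards [ratio_tendsto.eventually_le_const hzr] with n hn
  rw [norm_norm, norm_norm, hypergeometricCoeff_succ, pow_succ, mul_mul_mul_comm, norm_mul,
    mul_comm]
  exact mul_le_mul_of_nonneg_right hn (norm_nonneg _)

/-! ## Euler's transformation -/

lemma factorial_mul_multichoose (e : ℝ) (n : ℕ) :
    n.factorial * Ring.multichoose e n = risingFactorial e n := by
  rw [← nsmul_eq_mul, Ring.factorial_nsmul_multichoose_eq_ascPochhammer,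
    Polynomial.ascPochhammer_smeval_eq_eval]
  induction n with
  | zero => simp [risingFactorial_zero]
  | succ n ih => rw [risingFactorial_succ, ascPochhammer_succ_eval, ih]

lemma multichoose_succ_mul (e : ℝ) (n : ℕ) :
    Ring.multichoose e (n + 1) * (n + 1) = Ring.multichoose e n * (e + n) := by
  have h := factorial_mul_multichoose e (n + 1)
  rw [risingFactorial_succ, ← factorial_mul_multichoose, Nat.factorial_succ] at h
  push_cast at h
  refine mul_left_cancel₀ (show (n.factorial : ℝ) ≠ 0 by positivity) ?_
  linear_combination h

lemma hasSum_multichoose_mul_pow (e : ℝ) {z : ℝ} (hz : |z| < 1) :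
    HasSum (fun n => Ring.multichoose e n * z ^ n) (1 / (1 - z) ^ e) := by
  have hz' : z ∈ Metric.eball (0 : ℝ) 1 := by simpa [enorm_eq_nnnorm] using mod_cast hz
  simpa [← Ring.multichoose_eq, mul_comm] using
    (Real.one_div_one_sub_rpow_hasFPowerSeriesOnBall_zero e).hasSum hz'

lemma sum_hypergeometricCoeff_mul_multichoose_succ (a b : ℝ) {c : ℝ} (hc : ∀ m : ℕ, c ≠ -m)
    (n : ℕ) :
    (∑ k ∈ Finset.range (n + 2),
        hypergeometricCoeff a b c k * Ring.multichoose (c - a - b) (n + 1 - k)) *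
        ((c + n) * (n + 1)) =
      (∑ k ∈ Finset.range (n + 1),
        hypergeometricCoeff a b c k * Ring.multichoose (c - a - b) (n - k)) *
        ((c - a + n) * (c - b + n)) := by
  set e := c - a - b
  -- The certificate produced by Zeilberger's algorithm.
  let G : ℕ → ℝ := fun k =>
    -(k * (c + k - 1) * hypergeometricCoeff a b c k * Ring.multichoose e (n + 1 - k))
  have telescopes : ∀ k ∈ Finset.range (n + 1),
      hypergeometricCoeff a b c k * Ring.multichoose e (n + 1 - k) * ((c + n) * (n + 1)) -
        hypergeometricCoeff a b c k * Ring.multichoose e (n - k) * ((c - a + n) * (c - b + n)) =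
      G (k + 1) - G k := by
    intro k hk
    obtain ⟨m, rfl⟩ := Nat.exists_eq_add_of_le (Finset.mem_range_succ_iff.1 hk)
    have coeff_succ : (k + 1) * (c + k) * hypergeometricCoeff a b c (k + 1) =
        hypergeometricCoeff a b c k * ((a + k) * (b + k)) := by
      have hck : c + k ≠ 0 := fun h => hc k (eq_neg_of_add_eq_zero_left h)
      rw [hypergeometricCoeff_succ]
      field_simp
    simp only [G, show k + m + 1 - k = m + 1 by omega, show k + m - k = m by omega,
      show k + m + 1 - (k + 1) = m by omega]
    push_cast
    linear_combination Ring.multichoose e m * coeff_succ +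
      hypergeometricCoeff a b c k * (c + 2 * k + m) * multichoose_succ_mul e m
  have h := Finset.sum_congr rfl telescopes
  rw [Finset.sum_range_sub, Finset.sum_sub_distrib, ← Finset.sum_mul, ← Finset.sum_mul] at h
  rw [Finset.sum_range_succ]
  simp only [G, Nat.sub_self] at h ⊢
  push_cast at h
  linear_combination h

lemma sum_hypergeometricCoeff_mul_multichoose (a b : ℝ) {c : ℝ} (hc : ∀ m : ℕ, c ≠ -m) (n : ℕ) :
    ∑ k ∈ Finset.range (n + 1),
        hypergeometricCoeff a b c k * Ring.multichoose (c - a - b) (n - k) =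
      hypergeometricCoeff (c - a) (c - b) c n := by
  induction n with
  | zero => simp [hypergeometricCoeff_zero]
  | succ n ih =>
    have hcn : (c + n) * ((n : ℝ) + 1) ≠ 0 :=
      mul_ne_zero (fun h => hc n (eq_neg_of_add_eq_zero_left h)) n.cast_add_one_ne_zero
    refine mul_right_cancel₀ hcn ?_
    rw [sum_hypergeometricCoeff_mul_multichoose_succ a b hc, ih, hypergeometricCoeff_succ,
      mul_assoc, div_mul_cancel₀ _ hcn]

theorem gaussHypergeometric_euler (a b : ℝ) {c z : ℝ} (hc : ∀ m : ℕ, c ≠ -m) (hz : |z| < 1) :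
    gaussHypergeometric a b c z =
      (1 - z) ^ (c - a - b) * gaussHypergeometric (c - a) (c - b) c z := by
  have hpow : (1 - z) ^ (c - a - b) ≠ 0 :=
    (Real.rpow_pos_of_pos (by linarith [(abs_lt.1 hz).2]) _).ne'
  have binomial := hasSum_multichoose_mul_pow (c - a - b) hz
  have cauchy_product : gaussHypergeometric a b c z * (1 / (1 - z) ^ (c - a - b)) =
      gaussHypergeometric (c - a) (c - b) c z := by
    rw [← binomial.tsum_eq, gaussHypergeometric_eq_tsum,
      tsum_mul_tsum_eq_tsum_sum_range_of_summable_norm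
        (summable_norm_hypergeometricCoeff_mul_pow a b c hz) binomial.summable.norm]
    refine tsum_congr fun n => ?_
    rw [← hypergeometricCoeff, ← sum_hypergeometricCoeff_mul_multichoose a b hc, Finset.sum_mul]
    refine Finset.sum_congr rfl fun k hk => ?_
    rw [← pow_mul_pow_sub z (Finset.mem_range_succ_iff.1 hk)]
    ring
  rw [← cauchy_product]
  field_simp

/-! ## Gauss's summation theorem -/

lemma summable_of_raabe {f : ℕ → ℝ} {r : ℝ} (hf : ∀ n, 0 ≤ f n) (hr : 0 < r)
    (h : ∀ᶠ n : ℕ in atTop, r * f n ≤ n * f n - (n + 1) * f (n + 1)) : Summable f := by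
  obtain ⟨N, hN⟩ := eventually_atTop.1 h
  rw [← summable_nat_add_iff N]
  refine summable_of_sum_range_le (c := N * f N / r) (fun n => hf _) fun M => ?_
  rw [le_div_iff₀ hr, mul_comm, Finset.mul_sum]
  calc ∑ n ∈ Finset.range M, r * f (n + N)
      ≤ ∑ n ∈ Finset.range M, (((n + N : ℕ) : ℝ) * f (n + N) -
          ((n + 1 + N : ℕ) : ℝ) * f (n + 1 + N)) := by
        refine Finset.sum_le_sum fun n _ => (hN (n + N) (Nat.le_add_left N n)).trans_eq ?_
        rw [add_right_comm n 1 N]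
        push_cast
        rfl
    _ = N * f N - ((M + N : ℕ) : ℝ) * f (M + N) := by
        rw [Finset.sum_range_sub' fun n => ((n + N : ℕ) : ℝ) * f (n + N), zero_add]
    _ ≤ N * f N := sub_le_self _ (mul_nonneg (Nat.cast_nonneg _) (hf _))

lemma eq_zero_of_summable_of_tendsto_natCast_mul {f : ℕ → ℝ} {l : ℝ} (hf : Summable f)
    (h : Tendsto (fun n : ℕ => n * f n) atTop (𝓝 l)) : l = 0 := by
  by_contra hl
  have inv_isBigO : (fun n : ℕ => (n : ℝ)⁻¹) =O[atTop] f := by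
    refine ((h.inv₀ hl).isBigO_one ℝ |>.mul (Asymptotics.isBigO_refl f atTop)).congr' ?_ ?_
    · filter_upwards [h.eventually_ne hl] with n hn
      have := left_ne_zero_of_mul hn
      have := right_ne_zero_of_mul hn
      field_simp
    · simp
  exact Real.not_summable_natCast_inv (summable_of_isBigO_nat hf inv_isBigO)

lemma summable_norm_hypergeometricCoeff {a b c : ℝ} (habc : 0 < c - a - b) :
    Summable fun n => ‖hypergeometricCoeff a b c n‖ := by
  have excess_tendsto : Tendsto (fun n : ℕ => n - (a + n) * (b + n) / (c + n)) atTop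
      (𝓝 (c - a - b)) := by
    have h := tendsto_add_mul_div_add_mul_atTop_nhds (-(a * b)) c (c - a - b) one_ne_zero
    rw [div_one] at h
    refine h.congr' ?_
    filter_upwards [eventually_pos_add_natCast c] with n hc
    rw [one_mul]
    field_simp
    ring
  refine summable_of_raabe (fun n => norm_nonneg _) (half_pos habc) ?_
  filter_upwards [excess_tendsto.eventually_const_le (half_lt_self habc),
    eventually_pos_add_natCast a, eventually_pos_add_natCast b, eventually_pos_add_natCast c]
    with n hn ha hb hc
  have norm_succ : (n + 1) * ‖hypergeometricCoeff a b c (n + 1)‖ =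
      (a + n) * (b + n) / (c + n) * ‖hypergeometricCoeff a b c n‖ := by
    have ratio_nonneg : 0 ≤ (a + n) * (b + n) / ((c + n) * (n + 1)) := by positivity
    rw [hypergeometricCoeff_succ, norm_mul, Real.norm_of_nonneg ratio_nonneg]
    field_simp
  rw [norm_succ, ← sub_mul]
  exact mul_le_mul_of_nonneg_right hn (norm_nonneg _)

lemma hypergeometricCoeff_contiguous (a b : ℝ) {c : ℝ} (hc : ∀ m : ℕ, c ≠ -m) (n : ℕ) :
    (c - a - b) * c * hypergeometricCoeff a b c n -
        (c - a) * (c - b) * hypergeometricCoeff a b (c + 1) n =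
      c * (n * hypergeometricCoeff a b c n -
        (n + 1 : ℕ) * hypergeometricCoeff a b c (n + 1)) := by
  have h0 : c ≠ 0 := by simpa using hc 0
  have hn : c + n ≠ 0 := fun h => hc n (eq_neg_of_add_eq_zero_left h)
  rw [hypergeometricCoeff_add_one a b c n h0 hn, hypergeometricCoeff_succ]
  push_cast
  field_simp
  ring

lemma tsum_hypergeometricCoeff_contiguous {a b c : ℝ} (hc : ∀ m : ℕ, c ≠ -m)
    (habc : 0 < c - a - b) :
    (c - a - b) * c * ∑' n, hypergeometricCoeff a b c n =
      (c - a) * (c - b) * ∑' n, hypergeometricCoeff a b (c + 1) n := by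
  have h0 : c ≠ 0 := by simpa using hc 0
  have summable_c : Summable (hypergeometricCoeff a b c) :=
    (summable_norm_hypergeometricCoeff habc).of_norm
  have summable_c_add_one : Summable (hypergeometricCoeff a b (c + 1)) :=
    (summable_norm_hypergeometricCoeff (by linarith)).of_norm
  have partial_sums := ((summable_c.hasSum.mul_left ((c - a - b) * c)).sub
    (summable_c_add_one.hasSum.mul_left ((c - a) * (c - b)))).tendsto_sum_nat
  simp only [hypergeometricCoeff_contiguous a b hc, ← Finset.mul_sum,
    Finset.sum_range_sub' fun n : ℕ => n * hypergeometricCoeff a b c n, Nat.cast_zero, zero_mul,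
    zero_sub, mul_neg] at partial_sums
  have boundary_tendsto := partial_sums.neg.const_mul c⁻¹
  simp only [neg_neg, inv_mul_cancel_left₀ h0] at boundary_tendsto
  have h := eq_zero_of_summable_of_tendsto_natCast_mul summable_c boundary_tendsto
  rwa [mul_eq_zero_iff_left (inv_ne_zero h0), neg_eq_zero, sub_eq_zero] at h

lemma norm_hypergeometricCoeff_add_le (a b : ℝ) {c x : ℝ} (hc : 0 < c) (hx : 0 ≤ x) (n : ℕ) :
    ‖hypergeometricCoeff a b (c + x) n‖ ≤ ‖hypergeometricCoeff a b c n‖ := by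
  have risingFactorial_le : risingFactorial c n ≤ risingFactorial (c + x) n :=
    Finset.prod_le_prod (fun k _ => by positivity) fun k _ => by linarith
  have hpos := risingFactorial_pos hc n
  simp only [hypergeometricCoeff, norm_div, norm_mul, Real.norm_natCast]
  rw [Real.norm_of_nonneg hpos.le, Real.norm_of_nonneg (hpos.le.trans risingFactorial_le)]
  gcongr

lemma tendsto_risingFactorial_atTop {n : ℕ} (hn : n ≠ 0) :
    Tendsto (fun x => risingFactorial x n) atTop atTop := by
  induction n, Nat.one_le_iff_ne_zero.2 hn using Nat.le_induction with
  | base => exact tendsto_id.congr fun x => by simp [risingFactorial]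
  | succ n hn' ih =>
    simp only [risingFactorial_succ]
    exact (ih (by omega)).atTop_mul_atTop₀ (tendsto_atTop_add_const_right _ _ tendsto_id)

lemma tendsto_hypergeometricCoeff_add_natCast (a b c : ℝ) (n : ℕ) :
    Tendsto (fun N : ℕ => hypergeometricCoeff a b (c + N) n) atTop
      (𝓝 (if n = 0 then 1 else 0)) := by
  split_ifs with hn
  · simp [hn, hypergeometricCoeff_zero]
  · have denominator_tendsto :=
      ((tendsto_risingFactorial_atTop hn).comp
        (tendsto_atTop_add_const_left _ c tendsto_natCast_atTop_atTop)).atTop_mul_const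
        (show (0 : ℝ) < n.factorial by positivity)
    exact tendsto_const_nhds.div_atTop denominator_tendsto

lemma tendsto_tsum_hypergeometricCoeff_add_natCast {a b c : ℝ} (hc : 0 < c)
    (habc : 0 < c - a - b) :
    Tendsto (fun N : ℕ => ∑' n, hypergeometricCoeff a b (c + N) n) atTop (𝓝 1) := by
  have h := tendsto_tsum_of_dominated_convergence (summable_norm_hypergeometricCoeff habc)
    (tendsto_hypergeometricCoeff_add_natCast a b c)
    (Eventually.of_forall fun N n => norm_hypergeometricCoeff_add_le a b hc N.cast_nonneg n)
  rwa [tsum_ite_eq] at h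

lemma risingFactorial_mul_tsum_hypergeometricCoeff {a b c : ℝ} (hc : ∀ m : ℕ, c ≠ -m)
    (habc : 0 < c - a - b) (N : ℕ) :
    risingFactorial c N * risingFactorial (c - a - b) N * ∑' n, hypergeometricCoeff a b c n =
      risingFactorial (c - a) N * risingFactorial (c - b) N *
        ∑' n, hypergeometricCoeff a b (c + N) n := by
  induction N with
  | zero => simp [risingFactorial_zero]
  | succ N ih =>
    have hcN : ∀ m : ℕ, c + N ≠ -m := fun m h => hc (N + m) (by push_cast; linarith)
    have contiguous := tsum_hypergeometricCoeff_contiguous (a := a) (b := b) hcN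
      (by linarith [N.cast_nonneg (α := ℝ)])
    simp only [risingFactorial_succ]
    push_cast
    rw [← add_assoc]
    linear_combination (c - a - b + N) * (c + N) * ih +
      risingFactorial (c - a) N * risingFactorial (c - b) N * contiguous

lemma gammaSeq_mul_div_gammaSeq_mul (a b c : ℝ) {N : ℕ} (hN : N ≠ 0) :
    Real.GammaSeq c N * Real.GammaSeq (c - a - b) N /
        (Real.GammaSeq (c - a) N * Real.GammaSeq (c - b) N) =
      risingFactorial (c - a) (N + 1) * risingFactorial (c - b) (N + 1) /
        (risingFactorial c (N + 1) * risingFactorial (c - a - b) (N + 1)) := by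
  have hpow : (N : ℝ) ^ (c - a) * (N : ℝ) ^ (c - b) = (N : ℝ) ^ c * (N : ℝ) ^ (c - a - b) := by
    have hN' : (0 : ℝ) < N := by positivity
    rw [← Real.rpow_add hN', ← Real.rpow_add hN']
    ring_nf
  have hscale : (N : ℝ) ^ c * (N : ℝ) ^ (c - a - b) * (N.factorial * N.factorial : ℝ) ≠ 0 := by
    positivity
  simp only [Real.GammaSeq, risingFactorial]
  rw [div_mul_div_comm, div_mul_div_comm, div_div_div_eq, mul_mul_mul_comm ((N : ℝ) ^ c),
    mul_mul_mul_comm ((N : ℝ) ^ (c - a)), hpow, mul_comm _ (_ * (_ * _ : ℝ)),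
    mul_div_mul_left _ _ hscale]

theorem gaussHypergeometric_one {a b c : ℝ} (hc : 0 < c) (habc : 0 < c - a - b)
    (hca : ∀ m : ℕ, c - a ≠ -m) (hcb : ∀ m : ℕ, c - b ≠ -m) :
    gaussHypergeometric a b c 1 = Real.Gamma c * Real.Gamma (c - a - b) /
      (Real.Gamma (c - a) * Real.Gamma (c - b)) := by
  have limit := (((Real.GammaSeq_tendsto_Gamma c).mul (Real.GammaSeq_tendsto_Gamma (c - a - b))).div
    ((Real.GammaSeq_tendsto_Gamma (c - a)).mul (Real.GammaSeq_tendsto_Gamma (c - b)))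
    (mul_ne_zero (Real.Gamma_ne_zero hca) (Real.Gamma_ne_zero hcb))).mul
    ((tendsto_tsum_hypergeometricCoeff_add_natCast hc habc).comp (tendsto_add_atTop_nat 1))
  rw [mul_one] at limit
  refine tendsto_nhds_unique (tendsto_const_nhds.congr' ?_) limit
  filter_upwards [eventually_ne_atTop 0] with N hN
  have h := risingFactorial_mul_tsum_hypergeometricCoeff (neg_natCast_ne_of_pos hc) habc (N + 1)
  have hpos := mul_pos (risingFactorial_pos hc (N + 1)) (risingFactorial_pos habc (N + 1))
  simp only [gaussHypergeometric_eq_tsum, one_pow, mul_one, Pi.div_apply, Function.comp_apply,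
    gammaSeq_mul_div_gammaSeq_mul a b c hN]
  rw [div_mul_eq_mul_div, eq_div_iff hpos.ne', mul_comm, h]

/-! ## Gaussian integrals -/

/-- The weight `|x| ^ α * exp (-b x²)`; its integral is, up to normalisation, the absolute moment of
order `α` of a centered Gaussian of variance `1 / (2b)`. -/
noncomputable def gaussWeight (b α x : ℝ) : ℝ :=
  |x| ^ α * Real.exp (-b * x ^ 2)

lemma gaussWeight_nonneg (b α x : ℝ) : 0 ≤ gaussWeight b α x := by
  unfold gaussWeight
  positivity

lemma gaussWeight_neg (b α x : ℝ) : gaussWeight b α (-x) = gaussWeight b α x := by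
  simp [gaussWeight]

@[fun_prop]
lemma measurable_gaussWeight (b α : ℝ) : Measurable (gaussWeight b α) := by
  unfold gaussWeight
  fun_prop

lemma gaussWeight_mul_exp (b d α x : ℝ) :
    gaussWeight b α x * Real.exp (d * x ^ 2) = gaussWeight (b - d) α x := by
  rw [gaussWeight, gaussWeight, mul_assoc, ← Real.exp_add]
  ring_nf

lemma gaussWeight_add_two_mul (b x : ℝ) {α : ℝ} (hα : -1 < α) (n : ℕ) :
    gaussWeight b (α + 2 * n) x = gaussWeight b α x * x ^ (2 * n) := by
  have abs_rpow_add : |x| ^ (α + 2 * n) = |x| ^ α * x ^ (2 * n) := by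
    rcases n.eq_zero_or_pos with rfl | hn
    · simp
    · have : (1 : ℝ) ≤ n := mod_cast hn
      rw [Real.rpow_add' (abs_nonneg x) (by linarith), ← Nat.cast_two, ← Nat.cast_mul,
        Real.rpow_natCast, (even_two_mul n).pow_abs]
  rw [gaussWeight, gaussWeight, abs_rpow_add, mul_right_comm]

lemma integral_gaussWeight {b α : ℝ} (hb : 0 < b) (hα : -1 < α) :
    ∫ x, gaussWeight b α x = b ^ (-(α + 1) / 2) * Real.Gamma ((α + 1) / 2) := by
  have half_line := integral_rpow_mul_exp_neg_mul_rpow two_pos hα hb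
  have h := integral_comp_abs (f := fun x => x ^ α * Real.exp (-b * x ^ 2))
  simp only [sq_abs, ← Real.rpow_two, half_line] at h
  simp only [gaussWeight, ← Real.rpow_two, h]
  ring

lemma integral_gaussWeight_pos {b α : ℝ} (hb : 0 < b) (hα : -1 < α) :
    0 < ∫ x, gaussWeight b α x := by
  rw [integral_gaussWeight hb hα]
  have := Real.Gamma_pos_of_pos (s := (α + 1) / 2) (by linarith)
  positivity

lemma integrable_gaussWeight {b α : ℝ} (hb : 0 < b) (hα : -1 < α) :
    Integrable (gaussWeight b α) :=
  .of_integral_ne_zero (integral_gaussWeight_pos hb hα).ne'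

lemma integral_gaussWeight_add_two_mul {b α : ℝ} (hb : 0 < b) (hα : -1 < α) (n : ℕ) :
    ∫ x, gaussWeight b (α + 2 * n) x =
      risingFactorial ((α + 1) / 2) n / b ^ n * ∫ x, gaussWeight b α x := by
  have := n.cast_nonneg (α := ℝ)
  rw [integral_gaussWeight hb (by linarith), integral_gaussWeight hb hα,
    show (α + 2 * n + 1) / 2 = (α + 1) / 2 + n by ring,
    Gamma_add_natCast_eq_risingFactorial_mul (neg_natCast_ne_of_pos (by linarith)),
    show -(α + 2 * n + 1) / 2 = -(α + 1) / 2 - n by ring, Real.rpow_sub_natCast hb.ne']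
  ring

lemma integrable_gaussWeight_mul_gaussWeight_mul_exp {b t α β : ℝ} (ht : |t| < 2 * b)
    (hα : -1 < α) (hβ : -1 < β) :
    Integrable fun p : ℝ × ℝ =>
      gaussWeight b α p.1 * gaussWeight b β p.2 * Real.exp (t * (p.1 * p.2)) := by
  have hb : 0 < b - |t| / 2 := by linarith
  refine ((integrable_gaussWeight hb hα).mul_prod (integrable_gaussWeight hb hβ)).mono'
    (by fun_prop) (Eventually.of_forall fun ⟨x, y⟩ => ?_)
  have cross_term_le : t * (x * y) ≤ |t| / 2 * x ^ 2 + |t| / 2 * y ^ 2 := by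
    calc t * (x * y) ≤ |t| * (|x| * |y|) := by
          rw [← abs_mul, ← abs_mul]
          exact le_abs_self _
      _ ≤ |t| * ((|x| ^ 2 + |y| ^ 2) / 2) := by
          gcongr
          linarith [two_mul_le_add_sq |x| |y|]
      _ = |t| / 2 * x ^ 2 + |t| / 2 * y ^ 2 := by
          rw [sq_abs, sq_abs]
          ring
  have hx := gaussWeight_nonneg b α x
  have hy := gaussWeight_nonneg b β y
  rw [Real.norm_of_nonneg (by positivity), ← gaussWeight_mul_exp, ← gaussWeight_mul_exp,
    mul_mul_mul_comm, ← Real.exp_add]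
  gcongr

lemma integral_gaussWeight_mul_gaussWeight_mul_exp_neg {b t α β : ℝ} (ht : |t| < 2 * b)
    (hα : -1 < α) (hβ : -1 < β) :
    ∫ p : ℝ × ℝ, gaussWeight b α p.1 * gaussWeight b β p.2 * Real.exp (-t * (p.1 * p.2)) =
      ∫ p : ℝ × ℝ, gaussWeight b α p.1 * gaussWeight b β p.2 * Real.exp (t * (p.1 * p.2)) := by
  rw [Measure.volume_eq_prod,
    integral_prod _ (integrable_gaussWeight_mul_gaussWeight_mul_exp ht hα hβ),
    integral_prod _ (integrable_gaussWeight_mul_gaussWeight_mul_exp (by rwa [abs_neg]) hα hβ)]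
  refine integral_congr_ae (.of_forall fun x => ?_)
  dsimp only
  rw [← integral_neg_eq_self]
  simp only [gaussWeight_neg, neg_mul, mul_neg, neg_neg]

lemma integral_gaussWeight_mul_gaussWeight_mul_exp_eq_cosh {b t α β : ℝ} (ht : |t| < 2 * b)
    (hα : -1 < α) (hβ : -1 < β) :
    ∫ p : ℝ × ℝ, gaussWeight b α p.1 * gaussWeight b β p.2 * Real.exp (t * (p.1 * p.2)) =
      ∫ p : ℝ × ℝ, gaussWeight b α p.1 * gaussWeight b β p.2 * Real.cosh (t * (p.1 * p.2)) := by
  have h := integral_add (integrable_gaussWeight_mul_gaussWeight_mul_exp ht hα hβ)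
    (integrable_gaussWeight_mul_gaussWeight_mul_exp (by rwa [abs_neg]) hα hβ)
  rw [integral_gaussWeight_mul_gaussWeight_mul_exp_neg ht hα hβ, ← two_mul] at h
  simp only [Real.cosh_eq, mul_div_assoc', mul_add, integral_div, ← neg_mul]
  rw [h, mul_div_cancel_left₀ _ two_ne_zero]

lemma gaussWeight_mul_gaussWeight_mul_pow (b t : ℝ) {α β : ℝ} (hα : -1 < α) (hβ : -1 < β) (n : ℕ)
    (p : ℝ × ℝ) :
    gaussWeight b α p.1 * gaussWeight b β p.2 * ((t * (p.1 * p.2)) ^ (2 * n) / (2 * n).factorial) =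
      t ^ (2 * n) / (2 * n).factorial *
        (gaussWeight b (α + 2 * n) p.1 * gaussWeight b (β + 2 * n) p.2) := by
  rw [gaussWeight_add_two_mul b _ hα, gaussWeight_add_two_mul b _ hβ]
  ring

lemma integrable_gaussWeight_mul_gaussWeight_mul_pow {b : ℝ} (t : ℝ) {α β : ℝ} (hb : 0 < b)
    (hα : -1 < α) (hβ : -1 < β) (n : ℕ) :
    Integrable fun p : ℝ × ℝ => gaussWeight b α p.1 * gaussWeight b β p.2 *
      ((t * (p.1 * p.2)) ^ (2 * n) / (2 * n).factorial) := by
  have := n.cast_nonneg (α := ℝ)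
  simp only [gaussWeight_mul_gaussWeight_mul_pow b t hα hβ]
  exact ((integrable_gaussWeight hb (by linarith)).mul_prod
    (integrable_gaussWeight hb (by linarith))).const_mul _

lemma integral_gaussWeight_mul_gaussWeight_mul_pow {b : ℝ} (t : ℝ) {α β : ℝ} (hb : 0 < b)
    (hα : -1 < α) (hβ : -1 < β) (n : ℕ) :
    ∫ p : ℝ × ℝ, gaussWeight b α p.1 * gaussWeight b β p.2 *
        ((t * (p.1 * p.2)) ^ (2 * n) / (2 * n).factorial) =
      (∫ x, gaussWeight b α x) * (∫ y, gaussWeight b β y) *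
        (hypergeometricCoeff ((α + 1) / 2) ((β + 1) / 2) (1 / 2) n * ((t / (2 * b)) ^ 2) ^ n) := by
  have hpow : ((t / (2 * b)) ^ 2) ^ n = t ^ (2 * n) / (4 ^ n * b ^ n * b ^ n) := by
    rw [pow_mul, ← mul_pow, ← mul_pow, ← div_pow]
    ring
  simp only [gaussWeight_mul_gaussWeight_mul_pow b t hα hβ]
  rw [integral_const_mul, Measure.volume_eq_prod,
    integral_prod_mul (gaussWeight b (α + 2 * n)) (gaussWeight b (β + 2 * n)),
    integral_gaussWeight_add_two_mul hb hα, integral_gaussWeight_add_two_mul hb hβ,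
    factorial_two_mul_eq_risingFactorial, hypergeometricCoeff, hpow]
  ring

lemma integral_gaussWeight_mul_gaussWeight_mul_exp {b t α β : ℝ} (ht : |t| < 2 * b)
    (hα : -1 < α) (hβ : -1 < β) :
    ∫ p : ℝ × ℝ, gaussWeight b α p.1 * gaussWeight b β p.2 * Real.exp (t * (p.1 * p.2)) =
      (∫ x, gaussWeight b α x) * (∫ y, gaussWeight b β y) *
        gaussHypergeometric ((α + 1) / 2) ((β + 1) / 2) (1 / 2) ((t / (2 * b)) ^ 2) := by
  have hb : 0 < b := by linarith [abs_nonneg t]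
  let F : ℕ → ℝ × ℝ → ℝ := fun n p => gaussWeight b α p.1 * gaussWeight b β p.2 *
    ((t * (p.1 * p.2)) ^ (2 * n) / (2 * n).factorial)
  have norm_F (n : ℕ) (p : ℝ × ℝ) : ‖F n p‖ = F n p := by
    refine Real.norm_of_nonneg (mul_nonneg ?_ (div_nonneg ?_ (Nat.cast_nonneg _)))
    · exact mul_nonneg (gaussWeight_nonneg ..) (gaussWeight_nonneg ..)
    · exact (even_two_mul n).pow_nonneg _
  have summable_coeff : Summable fun n =>
      hypergeometricCoeff ((α + 1) / 2) ((β + 1) / 2) (1 / 2) n * ((t / (2 * b)) ^ 2) ^ n := by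
    refine (summable_norm_hypergeometricCoeff_mul_pow _ _ _ ?_).of_norm
    have hb2 : 0 < 2 * b := by positivity
    rw [abs_of_nonneg (sq_nonneg _), sq_lt_one_iff_abs_lt_one, abs_div, abs_of_pos hb2,
      div_lt_one hb2]
    exact ht
  have termwise := hasSum_integral_of_summable_integral_norm (F := F)
    (integrable_gaussWeight_mul_gaussWeight_mul_pow t hb hα hβ) (by
      simpa only [norm_F, F, integral_gaussWeight_mul_gaussWeight_mul_pow t hb hα hβ] using
        summable_coeff.mul_left _)
  simp only [F, tsum_mul_left, ← Real.cosh_eq_tsum,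
    integral_gaussWeight_mul_gaussWeight_mul_pow t hb hα hβ] at termwise
  rw [integral_gaussWeight_mul_gaussWeight_mul_exp_eq_cosh ht hα hβ, gaussHypergeometric_eq_tsum]
  exact termwise.unique (summable_coeff.hasSum.mul_left _)

/-! ## The bivariate Gaussian distribution -/

open ProbabilityTheory

/-- The law of a pair of standard Gaussian variables with correlation `ρ ∈ [-1, 1]`, realised as
`(ξ, ρ ξ + √(1 - ρ²) η)` with `ξ`, `η` independent and standard. Compared with the matrix square
root behind `multivariateGaussian`, this triangular form makes the joint density explicit. -/
noncomputable def bivariateGaussian (ρ : ℝ) : Measure (ℝ × ℝ) :=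
  ((gaussianReal 0 1).prod (gaussianReal 0 1)).map
    fun p => (p.1, ρ * p.1 + √(1 - ρ ^ 2) * p.2)

instance (ρ : ℝ) : IsProbabilityMeasure (bivariateGaussian ρ) :=
  Measure.isProbabilityMeasure_map (by fun_prop)

lemma bivariateGaussian_map_fst (ρ : ℝ) :
    (bivariateGaussian ρ).map Prod.fst = gaussianReal 0 1 := by
  rw [bivariateGaussian, Measure.map_map measurable_fst (by fun_prop)]
  exact Measure.map_fst_prod.trans (by simp)

lemma charFunDual_gaussianReal_zero_one (L : StrongDual ℝ ℝ) :
    charFunDual (gaussianReal 0 1) L = Complex.exp (-(L 1 : ℂ) ^ 2 / 2) := by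
  have hL : ⇑L = fun x => L 1 * x := by
    ext x
    rw [mul_comm, ← smul_eq_mul, ← map_smul, smul_eq_mul, mul_one]
  rw [charFunDual_eq_charFun_map_one, hL, charFun_map_mul, charFun_gaussianReal]
  simp [neg_div]

lemma charFunDual_bivariateGaussian {ρ : ℝ} (hρ : ρ ∈ Set.Icc (-1) 1) (L : StrongDual ℝ (ℝ × ℝ)) :
    charFunDual (bivariateGaussian ρ) L = Complex.exp
      (-((L (1, 0) ^ 2 + 2 * ρ * L (1, 0) * L (0, 1) + L (0, 1) ^ 2 : ℝ) : ℂ) / 2) := by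
  let T : ℝ × ℝ →L[ℝ] ℝ × ℝ := (ContinuousLinearMap.fst ℝ ℝ ℝ).prod
    (ρ • ContinuousLinearMap.fst ℝ ℝ ℝ + √(1 - ρ ^ 2) • ContinuousLinearMap.snd ℝ ℝ ℝ)
  have hT : bivariateGaussian ρ = ((gaussianReal 0 1).prod (gaussianReal 0 1)).map T := rfl
  have hT_fst : L (T (1, 0)) = L (1, 0) + ρ * L (0, 1) := by
    rw [← smul_eq_mul, ← map_smul, ← map_add]
    simp [T]
  have hT_snd : L (T (0, 1)) = √(1 - ρ ^ 2) * L (0, 1) := by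
    rw [← smul_eq_mul, ← map_smul]
    simp [T]
  have hsqrt : √(1 - ρ ^ 2) ^ 2 = 1 - ρ ^ 2 := Real.sq_sqrt (by nlinarith [hρ.1, hρ.2])
  rw [hT, charFunDual_map, charFunDual_prod, charFunDual_gaussianReal_zero_one,
    charFunDual_gaussianReal_zero_one, ← Complex.exp_add]
  simp only [ContinuousLinearMap.comp_apply, ContinuousLinearMap.inl_apply,
    ContinuousLinearMap.inr_apply, hT_fst, hT_snd]
  norm_cast
  rw [mul_pow, hsqrt]
  ring_nf

lemma bivariateGaussian_map_snd {ρ : ℝ} (hρ : ρ ∈ Set.Icc (-1) 1) :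
    (bivariateGaussian ρ).map Prod.snd = gaussianReal 0 1 := by
  have := Measure.isProbabilityMeasure_map (μ := bivariateGaussian ρ) measurable_snd.aemeasurable
  refine Measure.ext_of_charFunDual (funext fun L => ?_)
  rw [show Prod.snd = ⇑(ContinuousLinearMap.snd ℝ ℝ ℝ) from rfl, charFunDual_map,
    charFunDual_bivariateGaussian hρ, charFunDual_gaussianReal_zero_one]
  simp

lemma gaussianReal_zero_one_map_affine (m : ℝ) {v : ℝ} (hv : 0 ≤ v) :
    (gaussianReal 0 1).map (fun y => m + √v * y) = gaussianReal m v.toNNReal := by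
  have hvar : NNReal.mk (√v ^ 2) (sq_nonneg _) * 1 = v.toNNReal := by
    ext
    simp [Real.sq_sqrt hv, hv]
  calc (gaussianReal 0 1).map (fun y => m + √v * y)
      = ((gaussianReal 0 1).map (√v * ·)).map (m + ·) :=
        (Measure.map_map (by fun_prop) (by fun_prop)).symm
    _ = gaussianReal m v.toNNReal := by
        rw [gaussianReal_map_const_mul, gaussianReal_map_const_add, hvar, mul_zero, zero_add]

lemma measurable_gaussianPDF_comp {Ω : Type*} [MeasurableSpace Ω] {f g : Ω → ℝ} (hf : Measurable f)
    (hg : Measurable g) (v : NNReal) : Measurable fun ω => gaussianPDF (f ω) v (g ω) := by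
  simp only [gaussianPDF, gaussianPDFReal]
  fun_prop

lemma lintegral_gaussianReal (m : ℝ) {v : NNReal} (hv : v ≠ 0) {f : ℝ → ENNReal}
    (hf : Measurable f) :
    ∫⁻ x, f x ∂gaussianReal m v = ∫⁻ x, gaussianPDF m v x * f x := by
  rw [gaussianReal_of_var_ne_zero m hv,
    lintegral_withDensity_eq_lintegral_mul _ (measurable_gaussianPDF m v) hf]
  rfl

lemma bivariateGaussian_eq_withDensity {ρ : ℝ} (hρ : |ρ| < 1) :
    bivariateGaussian ρ = volume.withDensity fun p : ℝ × ℝ =>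
      gaussianPDF 0 1 p.1 * gaussianPDF (ρ * p.1) (1 - ρ ^ 2).toNNReal p.2 := by
  have hv : 0 < 1 - ρ ^ 2 := sub_pos.2 ((sq_lt_one_iff_abs_lt_one ρ).2 hρ)
  set v := (1 - ρ ^ 2).toNNReal
  have conditional_pdf_measurable : Measurable fun p : ℝ × ℝ => gaussianPDF (ρ * p.1) v p.2 :=
    measurable_gaussianPDF_comp (by fun_prop) measurable_snd v
  have pdf_measurable : Measurable fun p : ℝ × ℝ =>
      gaussianPDF 0 1 p.1 * gaussianPDF (ρ * p.1) v p.2 := by fun_prop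
  refine Measure.ext_of_lintegral _ fun f hf => ?_
  have conditional_law (x : ℝ) : ∫⁻ y, f (x, ρ * x + √(1 - ρ ^ 2) * y) ∂gaussianReal 0 1 =
      ∫⁻ y, gaussianPDF (ρ * x) v y * f (x, y) := by
    rw [← lintegral_map (f := fun y => f (x, y)) (g := fun y => ρ * x + √(1 - ρ ^ 2) * y)
      (by fun_prop) (by fun_prop), gaussianReal_zero_one_map_affine _ hv.le,
      lintegral_gaussianReal _ (Real.toNNReal_pos.2 hv).ne' (by fun_prop)]
  rw [bivariateGaussian, lintegral_map hf (by fun_prop), lintegral_prod _ (by fun_prop)]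
  simp only [conditional_law]
  rw [lintegral_withDensity_eq_lintegral_mul _ pdf_measurable hf, Measure.volume_eq_prod,
    lintegral_prod _ (pdf_measurable.mul hf).aemeasurable, lintegral_gaussianReal _ one_ne_zero
      (by exact (conditional_pdf_measurable.mul hf).lintegral_prod_right')]
  refine lintegral_congr fun x => ?_
  simp only [Pi.mul_apply, mul_assoc]
  rw [lintegral_const_mul _ (by fun_prop)]

lemma gaussianPDFReal_mul_gaussianPDFReal {ρ : ℝ} (hρ : |ρ| < 1) (x y : ℝ) :
    gaussianPDFReal 0 1 x * gaussianPDFReal (ρ * x) (1 - ρ ^ 2).toNNReal y =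
      (2 * Real.pi * √(1 - ρ ^ 2))⁻¹ *
        Real.exp (-(x ^ 2 - 2 * ρ * (x * y) + y ^ 2) / (2 * (1 - ρ ^ 2))) := by
  have hv : 0 < 1 - ρ ^ 2 := sub_pos.2 ((sq_lt_one_iff_abs_lt_one ρ).2 hρ)
  have normalisation : √(2 * Real.pi) * √(2 * Real.pi * (1 - ρ ^ 2)) =
      2 * Real.pi * √(1 - ρ ^ 2) := by
    rw [Real.sqrt_mul (by positivity) (1 - ρ ^ 2), ← mul_assoc, Real.mul_self_sqrt (by positivity)]
  have exponent : -x ^ 2 / 2 + -(y - ρ * x) ^ 2 / (2 * (1 - ρ ^ 2)) =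
      -(x ^ 2 - 2 * ρ * (x * y) + y ^ 2) / (2 * (1 - ρ ^ 2)) := by
    field_simp
    ring
  simp only [gaussianPDFReal, NNReal.coe_one, mul_one, sub_zero, Real.coe_toNNReal _ hv.le]
  rw [mul_mul_mul_comm, ← mul_inv, normalisation, ← Real.exp_add, exponent]

lemma integral_abs_rpow_gaussianReal {α : ℝ} (hα : -1 < α) :
    ∫ x, |x| ^ α ∂gaussianReal 0 1 = 2 ^ (α / 2) * Real.Gamma ((α + 1) / 2) / √Real.pi := by
  have pdf_mul (x : ℝ) :
      gaussianPDFReal 0 1 x • |x| ^ α = (√(2 * Real.pi))⁻¹ * gaussWeight (1 / 2) α x := by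
    simp only [gaussianPDFReal, gaussWeight, NNReal.coe_one, mul_one, sub_zero, smul_eq_mul]
    ring_nf
  rw [integral_gaussianReal_eq_integral_smul one_ne_zero]
  simp only [pdf_mul]
  rw [integral_const_mul, integral_gaussWeight one_half_pos hα, one_div, neg_div,
    Real.inv_rpow two_pos.le, Real.rpow_neg two_pos.le, inv_inv, add_div, Real.rpow_add two_pos,
    ← Real.sqrt_eq_rpow, Real.sqrt_mul two_pos.le]
  field_simp

lemma integral_gaussWeight_eq_mul_integral_gaussianReal {v α : ℝ} (hv : 0 < v) (hα : -1 < α) :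
    ∫ x, gaussWeight (1 / (2 * v)) α x =
      √(2 * Real.pi) * v ^ ((α + 1) / 2) * ∫ x, |x| ^ α ∂gaussianReal 0 1 := by
  rw [integral_gaussWeight (by positivity) hα, integral_abs_rpow_gaussianReal hα, one_div, neg_div,
    Real.inv_rpow (by positivity), Real.rpow_neg (by positivity), inv_inv,
    Real.mul_rpow two_pos.le hv.le, add_div, Real.rpow_add two_pos, ← Real.sqrt_eq_rpow,
    Real.sqrt_mul two_pos.le]
  field_simp

lemma integral_bivariateGaussian_eq_integral_gaussWeight {ρ : ℝ} (hρ : |ρ| < 1) (α β : ℝ) :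
    ∫ p, |p.1| ^ α * |p.2| ^ β ∂bivariateGaussian ρ =
      (2 * Real.pi * √(1 - ρ ^ 2))⁻¹ *
        ∫ p : ℝ × ℝ, gaussWeight (1 / (2 * (1 - ρ ^ 2))) α p.1 *
          gaussWeight (1 / (2 * (1 - ρ ^ 2))) β p.2 *
          Real.exp (ρ / (1 - ρ ^ 2) * (p.1 * p.2)) := by
  have hpdf : Measurable fun p : ℝ × ℝ =>
      gaussianPDF 0 1 p.1 * gaussianPDF (ρ * p.1) (1 - ρ ^ 2).toNNReal p.2 :=
    (measurable_gaussianPDF_comp measurable_const measurable_fst _).mul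
      (measurable_gaussianPDF_comp (by fun_prop) measurable_snd _)
  rw [bivariateGaussian_eq_withDensity hρ, integral_withDensity_eq_integral_toReal_smul hpdf
    (.of_forall fun p => ENNReal.mul_lt_top gaussianPDF_lt_top gaussianPDF_lt_top),
    ← integral_const_mul]
  refine integral_congr_ae (.of_forall fun ⟨x, y⟩ => ?_)
  have hv : 1 - ρ ^ 2 ≠ 0 := (sub_pos.2 ((sq_lt_one_iff_abs_lt_one ρ).2 hρ)).ne'
  have exponent : -(x ^ 2 - 2 * ρ * (x * y) + y ^ 2) / (2 * (1 - ρ ^ 2)) =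
      -(1 / (2 * (1 - ρ ^ 2))) * x ^ 2 + -(1 / (2 * (1 - ρ ^ 2))) * y ^ 2 +
        ρ / (1 - ρ ^ 2) * (x * y) := by
    field_simp
    ring
  simp only [ENNReal.toReal_mul, toReal_gaussianPDF, gaussianPDFReal_mul_gaussianPDFReal hρ,
    smul_eq_mul, exponent, Real.exp_add, gaussWeight]
  ring

lemma integral_bivariateGaussian_of_abs_lt_one {ρ α β : ℝ} (hρ : |ρ| < 1) (hα : -1 < α)
    (hβ : -1 < β) :
    ∫ p, |p.1| ^ α * |p.2| ^ β ∂bivariateGaussian ρ =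
      (∫ x, |x| ^ α ∂gaussianReal 0 1) * (∫ x, |x| ^ β ∂gaussianReal 0 1) *
        gaussHypergeometric (-α / 2) (-β / 2) (1 / 2) (ρ ^ 2) := by
  have hρ2 : ρ ^ 2 < 1 := (sq_lt_one_iff_abs_lt_one ρ).2 hρ
  have hv : 0 < 1 - ρ ^ 2 := sub_pos.2 hρ2
  have ht : |ρ / (1 - ρ ^ 2)| < 2 * (1 / (2 * (1 - ρ ^ 2))) := by
    rw [abs_div, abs_of_pos hv, mul_one_div, ← div_div, div_self two_ne_zero]
    gcongr
  have hz : ρ / (1 - ρ ^ 2) / (2 * (1 / (2 * (1 - ρ ^ 2)))) = ρ := by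
    field_simp
  have euler := gaussHypergeometric_euler (-α / 2) (-β / 2) (neg_natCast_ne_of_pos one_half_pos)
    ((abs_of_nonneg (sq_nonneg ρ)).trans_lt hρ2)
  rw [show (1 / 2 - -α / 2 : ℝ) = (α + 1) / 2 by ring,
    show (1 / 2 - -β / 2 : ℝ) = (β + 1) / 2 by ring,
    show ((α + 1) / 2 - -β / 2 : ℝ) = (α + 1) / 2 + (β + 1) / 2 - 1 / 2 by ring,
    Real.rpow_sub hv, Real.rpow_add hv, ← Real.sqrt_eq_rpow] at euler
  rw [integral_bivariateGaussian_eq_integral_gaussWeight hρ,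
    integral_gaussWeight_mul_gaussWeight_mul_exp ht hα hβ, hz,
    integral_gaussWeight_eq_mul_integral_gaussianReal hv hα,
    integral_gaussWeight_eq_mul_integral_gaussianReal hv hβ, euler]
  field_simp
  rw [Real.sq_sqrt (by positivity)]

lemma bivariateGaussian_of_abs_eq_one {ρ : ℝ} (hρ : |ρ| = 1) :
    bivariateGaussian ρ = (gaussianReal 0 1).map fun x => (x, ρ * x) := by
  have hρ2 : ρ ^ 2 = 1 := by rw [← sq_abs, hρ, one_pow]
  rw [← bivariateGaussian_map_fst ρ, bivariateGaussian, Measure.map_map (by fun_prop) (by fun_prop),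
    Measure.map_map (by fun_prop) (by fun_prop)]
  congr 1
  ext p <;> simp [hρ2]

lemma integral_bivariateGaussian_of_abs_eq_one {ρ α β : ℝ} (hρ : |ρ| = 1) (hα : -1 < α)
    (hβ : -1 < β) (hαβ : -1 < α + β) :
    ∫ p, |p.1| ^ α * |p.2| ^ β ∂bivariateGaussian ρ =
      (∫ x, |x| ^ α ∂gaussianReal 0 1) * (∫ x, |x| ^ β ∂gaussianReal 0 1) *
        gaussHypergeometric (-α / 2) (-β / 2) (1 / 2) (ρ ^ 2) := by
  have hρ2 : ρ ^ 2 = 1 := by rw [← sq_abs, hρ, one_pow]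
  have hα2 : 0 < (α + 1) / 2 := by linarith
  have hβ2 : 0 < (β + 1) / 2 := by linarith
  have gauss := gaussHypergeometric_one (a := -α / 2) (b := -β / 2) one_half_pos (by linarith)
    (neg_natCast_ne_of_pos (by linarith)) (neg_natCast_ne_of_pos (by linarith))
  rw [show (1 / 2 - -α / 2 : ℝ) = (α + 1) / 2 by ring,
    show (1 / 2 - -β / 2 : ℝ) = (β + 1) / 2 by ring,
    show ((α + 1) / 2 - -β / 2 : ℝ) = (α + β + 1) / 2 by ring, Real.Gamma_one_half_eq] at gauss
  have collapse : ∫ p, |p.1| ^ α * |p.2| ^ β ∂bivariateGaussian ρ =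
      ∫ x, |x| ^ (α + β) ∂gaussianReal 0 1 := by
    rw [bivariateGaussian_of_abs_eq_one hρ, integral_map (by fun_prop) (by fun_prop)]
    have := nullSingletonClass_gaussianReal (μ := 0) (v := 1) one_ne_zero
    refine integral_congr_ae ?_
    filter_upwards [Measure.ae_ne (gaussianReal 0 1) 0] with x hx
    simp only [abs_mul, hρ, one_mul, Real.rpow_add (abs_pos.2 hx)]
  rw [collapse, integral_abs_rpow_gaussianReal hαβ, integral_abs_rpow_gaussianReal hα,
    integral_abs_rpow_gaussianReal hβ, hρ2, gauss, add_div α, Real.rpow_add two_pos]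
  have := Real.Gamma_pos_of_pos hα2
  have := Real.Gamma_pos_of_pos hβ2
  field_simp

lemma integral_bivariateGaussian {ρ α β : ℝ} (hρ : ρ ∈ Set.Icc (-1) 1) (hα : -1 < α)
    (hβ : -1 < β) (hαβ : |ρ| = 1 → -1 < α + β) :
    ∫ p, |p.1| ^ α * |p.2| ^ β ∂bivariateGaussian ρ =
      (∫ x, |x| ^ α ∂gaussianReal 0 1) * (∫ x, |x| ^ β ∂gaussianReal 0 1) *
        gaussHypergeometric (-α / 2) (-β / 2) (1 / 2) (ρ ^ 2) :=
  (abs_le.2 hρ).lt_or_eq.elim (fun h => integral_bivariateGaussian_of_abs_lt_one h hα hβ)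
    fun h => integral_bivariateGaussian_of_abs_eq_one h hα hβ (hαβ h)

lemma map_eq_bivariateGaussian {Ω : Type*} [MeasurableSpace Ω] {μ : Measure Ω}
    [IsProbabilityMeasure μ] {X : Ω → (Fin 2 → ℝ)} (hXm : Measurable X) {ρ : ℝ}
    (hρ : ρ ∈ Set.Icc (-1 : ℝ) 1)
    (hGauss : ∀ u : Fin 2 → ℝ,
      ∫ ω, Complex.exp (Complex.I * ((u ⬝ᵥ X ω : ℝ) : ℂ)) ∂μ =
        Complex.exp (-(((u ⬝ᵥ (!![1, ρ; ρ, 1]) *ᵥ u : ℝ) : ℂ)) / 2)) :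
    μ.map (fun ω => (X ω 0, X ω 1)) = bivariateGaussian ρ := by
  have hpair : Measurable fun ω => (X ω 0, X ω 1) := by fun_prop
  have := Measure.isProbabilityMeasure_map (μ := μ) hpair.aemeasurable
  refine Measure.ext_of_charFunDual (funext fun L => ?_)
  have linear_form (ω : Ω) : L (X ω 0, X ω 1) = ![L (1, 0), L (0, 1)] ⬝ᵥ X ω := by
    have hX : (X ω 0, X ω 1) = X ω 0 • ((1, 0) : ℝ × ℝ) + X ω 1 • ((0, 1) : ℝ × ℝ) := by simp
    rw [hX, map_add, map_smul, map_smul]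
    simp [dotProduct, mul_comm]
  have quadratic_form : ![L (1, 0), L (0, 1)] ⬝ᵥ !![1, ρ; ρ, 1] *ᵥ ![L (1, 0), L (0, 1)] =
      L (1, 0) ^ 2 + 2 * ρ * L (1, 0) * L (0, 1) + L (0, 1) ^ 2 := by
    simp only [mulVec, dotProduct, Fin.sum_univ_two, of_apply, cons_val_zero, cons_val_one]
    ring
  rw [charFunDual_bivariateGaussian hρ, charFunDual_apply,
    integral_map hpair.aemeasurable (by fun_prop), ← quadratic_form, ← hGauss]
  simp only [linear_form, mul_comm Complex.I]

theorem nabeya_formula_general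
    {Ω : Type*} [MeasurableSpace Ω] (μ : Measure Ω) [IsProbabilityMeasure μ]
    (X : Ω → (Fin 2 → ℝ)) (hXm : Measurable X)
    (ρ : ℝ) (hρ : ρ ∈ Set.Icc (-1 : ℝ) 1)
    (hGauss : ∀ u : Fin 2 → ℝ,
      ∫ ω, Complex.exp (Complex.I * ((u ⬝ᵥ X ω : ℝ) : ℂ)) ∂μ =
        Complex.exp (-(((u ⬝ᵥ (!![1, ρ; ρ, 1]) *ᵥ u : ℝ) : ℂ)) / 2))
    (α₂ α₃ : ℝ) (hα₂ : -1 < α₂) (hα₃ : -1 < α₃) (hα : |ρ| = 1 → -1 < α₂ + α₃) :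
    ∫ ω, |X ω 0| ^ α₂ * |X ω 1| ^ α₃ ∂μ =
      (∫ ω, |X ω 0| ^ α₂ ∂μ) * (∫ ω, |X ω 1| ^ α₃ ∂μ) *
        gaussHypergeometric (-α₂ / 2) (-α₃ / 2) (1 / 2) (ρ ^ 2) := by
  have hpair : Measurable fun ω => (X ω 0, X ω 1) := by fun_prop
  have hlaw := map_eq_bivariateGaussian hXm hρ hGauss
  have hfst : μ.map (fun ω => X ω 0) = gaussianReal 0 1 := by
    rw [← bivariateGaussian_map_fst ρ, ← hlaw, Measure.map_map measurable_fst hpair]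
    rfl
  have hsnd : μ.map (fun ω => X ω 1) = gaussianReal 0 1 := by
    rw [← bivariateGaussian_map_snd hρ, ← hlaw, Measure.map_map measurable_snd hpair]
    rfl
  have moment := integral_bivariateGaussian hρ hα₂ hα₃ hα
  nth_rw 1 [← hfst] at moment
  have hmeas (γ : ℝ) : Measurable fun x : ℝ => |x| ^ γ := by fun_prop
  rwa [← hsnd, ← hlaw, integral_map hpair.aemeasurable (by fun_prop),
    integral_map (by fun_prop) (hmeas α₂).aestronglyMeasurable,
    integral_map (by fun_prop) (hmeas α₃).aestronglyMeasurable] at moment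

end

theorem nabeya_formula
    {Ω : Type*} [MeasurableSpace Ω] (μ : Measure Ω) [IsProbabilityMeasure μ]
    (X : Ω → (Fin 2 → ℝ)) (hXm : Measurable X)
    (ρ : ℝ) (hρ : ρ ∈ Set.Icc (-1 : ℝ) 1)
    (hGauss : ∀ u : Fin 2 → ℝ,
      ∫ ω, Complex.exp (Complex.I * ((u ⬝ᵥ X ω : ℝ) : ℂ)) ∂μ =
        Complex.exp (-(((u ⬝ᵥ (!![1, ρ; ρ, 1]) *ᵥ u : ℝ) : ℂ)) / 2))
    (α₂ α₃ : ℝ) (hα₂ : 0 < α₂) (hα₃ : 0 < α₃) :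
    ∫ ω, |X ω 0| ^ α₂ * |X ω 1| ^ α₃ ∂μ =
      (∫ ω, |X ω 0| ^ α₂ ∂μ) * (∫ ω, |X ω 1| ^ α₃ ∂μ) *
        gaussHypergeometric (-α₂ / 2) (-α₃ / 2) (1 / 2) (ρ ^ 2) :=
  nabeya_formula_general μ X hXm ρ hρ hGauss α₂ α₃ (by linarith) (by linarith) fun _ => by linarith
end

section
/- Let Σ be an n×n positive definite real matrix and T a positive semidefinite n×n diagonal matrix. Let X be a centered Gaussian vector with covariance Σ and Y a centered Gaussian vector with covariance (Σ^{-1}+2T)^{-1}. Then for any bounded measurable function g: ℝⁿ → ℝ, E[exp(-⟨X, T X⟩) g(X)] = det(Iₙ + 2TΣ)^{-1/2} E[g(Y)]. -/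
open MeasureTheory Matrix

/-!
A Gaussian law with positive definite covariance `S` has density proportional to
`exp (-⟨x, S⁻¹ x⟩ / 2)`, being the image of the standard Gaussian under `z ↦ m + A z` with
`A * Aᵀ = S`. Multiplying by `exp (-⟨x, T x⟩)` therefore replaces the precision matrix `S⁻¹` by
`S⁻¹ + 2T`, and the total mass is the quotient of the normalising constants,
`(det (S⁻¹ + 2T) * det S) ^ (-1/2) = det (1 + 2TS) ^ (-1/2)`.
-/

open ProbabilityTheory WithLp Module
open scoped Real RealInnerProductSpace MatrixOrder

lemma map_withDensity_comp {α β : Type*} [MeasurableSpace α] [MeasurableSpace β]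
    (μ : Measure α) {f : α → β} (hf : Measurable f) {ρ : β → ENNReal} (hρ : Measurable ρ) :
    (μ.withDensity (ρ ∘ f)).map f = (μ.map f).withDensity ρ := by
  ext s hs
  rw [Measure.map_apply hf hs, withDensity_apply _ (hf hs), withDensity_apply _ hs,
    setLIntegral_map hs hρ hf]
  rfl

section StdGaussian

variable {E : Type*} [NormedAddCommGroup E] [InnerProductSpace ℝ E]

/-- The density of the standard Gaussian measure `stdGaussian E` with respect to the
Lebesgue measure. -/
noncomputable def stdGaussianPDFReal (x : E) : ℝ :=
  (√(2 * π) ^ finrank ℝ E)⁻¹ * Real.exp (-‖x‖ ^ 2 / 2)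

lemma stdGaussianPDFReal_nonneg (x : E) : 0 ≤ stdGaussianPDFReal x := by
  unfold stdGaussianPDFReal
  positivity

variable [MeasurableSpace E] [BorelSpace E]

lemma measurable_stdGaussianPDFReal : Measurable (stdGaussianPDFReal (E := E)) := by
  unfold stdGaussianPDFReal
  fun_prop

variable [FiniteDimensional ℝ E]

lemma integrable_stdGaussianPDFReal : Integrable (stdGaussianPDFReal (E := E)) := by
  refine Integrable.const_mul (Integrable.of_integral_ne_zero ?_) _
  have h := GaussianFourier.integral_rexp_neg_mul_sq_norm (V := E) (b := 1 / 2) (by norm_num)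
  have hexponent (v : E) : -‖v‖ ^ 2 / 2 = -(1 / 2) * ‖v‖ ^ 2 := by ring
  simp_rw [hexponent, h]
  positivity

lemma integral_stdGaussianPDFReal_smul_cexp_inner (t : E) :
    ∫ x : E, stdGaussianPDFReal x • Complex.exp (⟪x, t⟫ * Complex.I) =
      Complex.exp (-‖t‖ ^ 2 / 2) := by
  have h := GaussianFourier.integral_cexp_neg_mul_sq_norm_add (V := E) (b := 1 / 2) (by norm_num)
    Complex.I t
  have hnorm : (π / (1 / 2) : ℂ) ^ (finrank ℝ E / 2 : ℂ) = (√(2 * π) ^ finrank ℝ E : ℝ) := by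
    rw [Real.sqrt_eq_rpow, ← Real.rpow_mul_natCast (by positivity),
      Complex.ofReal_cpow (by positivity)]
    push_cast
    congr 1 <;> ring
  have hintegrand (x : E) : stdGaussianPDFReal x • Complex.exp (⟪x, t⟫ * Complex.I) =
      ((√(2 * π) ^ finrank ℝ E)⁻¹ : ℝ) *
        Complex.exp (-(1 / 2) * ‖x‖ ^ 2 + Complex.I * ⟪t, x⟫) := by
    rw [stdGaussianPDFReal, Complex.real_smul, Complex.exp_add, real_inner_comm]
    push_cast
    rw [mul_assoc]
    congr 3 <;> ring_nf
  simp_rw [hintegrand]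
  rw [integral_const_mul, h, hnorm, ← mul_assoc, ← Complex.ofReal_mul,
    inv_mul_cancel₀ (by positivity), Complex.I_sq]
  push_cast
  ring_nf

lemma stdGaussian_eq_withDensity :
    stdGaussian E = volume.withDensity fun x ↦ ENNReal.ofReal (stdGaussianPDFReal x) := by
  have : IsFiniteMeasure (volume.withDensity fun x : E ↦ ENNReal.ofReal (stdGaussianPDFReal x)) :=
    isFiniteMeasure_withDensity_ofReal integrable_stdGaussianPDFReal.hasFiniteIntegral
  refine Measure.ext_of_charFun (funext fun t ↦ ?_)
  rw [charFun_stdGaussian, charFun_apply, integral_withDensity_eq_integral_toReal_smul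
    measurable_stdGaussianPDFReal.ennreal_ofReal (by simp)]
  simp_rw [ENNReal.toReal_ofReal (stdGaussianPDFReal_nonneg _)]
  exact (integral_stdGaussianPDFReal_smul_cexp_inner t).symm

end StdGaussian

section MultivariateGaussian

variable {ι : Type*} [Fintype ι]

lemma measurable_dotProduct_mulVec_self (T : Matrix ι ι ℝ) :
    Measurable fun x : ι → ℝ ↦ x ⬝ᵥ T *ᵥ x := by
  simp only [dotProduct, mulVec]
  fun_prop

lemma measurable_ofReal_exp_neg_dotProduct_mulVec_self (T : Matrix ι ι ℝ) :
    Measurable fun x : ι → ℝ ↦ ENNReal.ofReal (Real.exp (-(x ⬝ᵥ T *ᵥ x))) :=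
  (measurable_dotProduct_mulVec_self T).neg.exp.ennreal_ofReal

variable [DecidableEq ι] {A S T : Matrix ι ι ℝ}

/-- The density of `multivariateGaussian m S` with respect to the Lebesgue measure, for a
positive definite covariance matrix `S`. -/
noncomputable def multivariateGaussianPDFReal (m : EuclideanSpace ℝ ι) (S : Matrix ι ι ℝ)
    (x : EuclideanSpace ℝ ι) : ℝ :=
  (√(2 * π) ^ Fintype.card ι * √S.det)⁻¹ *
    Real.exp (-((x - m).ofLp ⬝ᵥ S⁻¹ *ᵥ (x - m).ofLp) / 2)

lemma measurable_multivariateGaussianPDFReal (m : EuclideanSpace ℝ ι) (S : Matrix ι ι ℝ) :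
    Measurable (multivariateGaussianPDFReal m S) := by
  have hquad := (measurable_dotProduct_mulVec_self S⁻¹).comp
    (f := fun x : EuclideanSpace ℝ ι ↦ (x - m).ofLp) (by fun_prop)
  exact (hquad.neg.div_const 2).exp.const_mul _

lemma mulVec_dotProduct_inv_mul_transpose_mulVec (hA : A.det ≠ 0) (z : ι → ℝ) :
    (A *ᵥ z) ⬝ᵥ (A * Aᵀ)⁻¹ *ᵥ (A *ᵥ z) = z ⬝ᵥ z := by
  have hunit : IsUnit A.det := hA.isUnit
  rw [dotProduct_comm, dotProduct_mulVec, ← mulVec_transpose, mulVec_mulVec, mulVec_mulVec,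
    Matrix.mul_inv_rev, Matrix.mul_assoc, Matrix.mul_assoc, nonsing_inv_mul _ hunit,
    Matrix.mul_one, mul_nonsing_inv _ (by rwa [det_transpose]), one_mulVec]

lemma abs_det_mul_multivariateGaussianPDFReal_affine (hA : A.det ≠ 0)
    (m z : EuclideanSpace ℝ ι) :
    |A.det| * multivariateGaussianPDFReal m (A * Aᵀ) (m + toEuclideanCLM (𝕜 := ℝ) A z) =
      stdGaussianPDFReal z := by
  have hdet : √(A * Aᵀ).det = |A.det| := by
    rw [det_mul, det_transpose, Real.sqrt_mul_self_eq_abs]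
  have hnorm : ‖z‖ ^ 2 = z.ofLp ⬝ᵥ z.ofLp := by
    rw [EuclideanSpace.real_norm_sq_eq]
    simp only [dotProduct, pow_two]
  rw [multivariateGaussianPDFReal, stdGaussianPDFReal, add_sub_cancel_left, ofLp_toEuclideanCLM,
    mulVec_dotProduct_inv_mul_transpose_mulVec hA, finrank_euclideanSpace, hdet, hnorm]
  field_simp

lemma map_affine_volume_euclideanSpace (hA : A.det ≠ 0) (m : EuclideanSpace ℝ ι) :
    (volume : Measure (EuclideanSpace ℝ ι)).map (fun z ↦ m + toEuclideanCLM (𝕜 := ℝ) A z) =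
      ENNReal.ofReal |A.det|⁻¹ • volume := by
  have hlin : (volume : Measure (EuclideanSpace ℝ ι)).map (toEuclideanCLM (𝕜 := ℝ) A) =
      ENNReal.ofReal |A.det|⁻¹ • volume := by
    have hdet : LinearMap.det (A.toLpLin 2 2) = A.det := LinearMap.det_toLpLin 2 A
    have h := Measure.map_linearMap_addHaar_eq_smul_addHaar
      (volume : Measure (EuclideanSpace ℝ ι)) (hdet.trans_ne hA)
    rwa [hdet, abs_inv] at h
  change volume.map ((m + ·) ∘ toEuclideanCLM (𝕜 := ℝ) A) = _
  rw [← Measure.map_map (by fun_prop) (by fun_prop), hlin, Measure.map_smul,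
    map_add_left_eq_self]

lemma map_affine_stdGaussian_eq_withDensity (hA : A.det ≠ 0) (m : EuclideanSpace ℝ ι) :
    (stdGaussian (EuclideanSpace ℝ ι)).map (fun z ↦ m + toEuclideanCLM (𝕜 := ℝ) A z) =
      volume.withDensity fun x ↦ ENNReal.ofReal (multivariateGaussianPDFReal m (A * Aᵀ) x) := by
  set c : ENNReal := ENNReal.ofReal |A.det|
  set ρ : EuclideanSpace ℝ ι → ENNReal :=
    fun x ↦ ENNReal.ofReal (multivariateGaussianPDFReal m (A * Aᵀ) x)
  have hρ : Measurable ρ := (measurable_multivariateGaussianPDFReal _ _).ennreal_ofReal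
  have hstd : (fun z : EuclideanSpace ℝ ι ↦ ENNReal.ofReal (stdGaussianPDFReal z)) =
      (c • ρ) ∘ fun z ↦ m + toEuclideanCLM (𝕜 := ℝ) A z := by
    ext z
    simp only [c, ρ, Function.comp_apply, Pi.smul_apply, smul_eq_mul,
      ← abs_det_mul_multivariateGaussianPDFReal_affine hA m z,
      ENNReal.ofReal_mul (abs_nonneg A.det)]
  have hc : ENNReal.ofReal |A.det|⁻¹ * c = 1 := by
    rw [← ENNReal.ofReal_mul (by positivity), inv_mul_cancel₀ (abs_ne_zero.2 hA),
      ENNReal.ofReal_one]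
  rw [stdGaussian_eq_withDensity, hstd, map_withDensity_comp _ (by fun_prop) (hρ.const_smul c),
    map_affine_volume_euclideanSpace hA, withDensity_smul_measure, withDensity_smul _ hρ,
    smul_smul, hc, one_smul]

lemma multivariateGaussian_eq_withDensity (m : EuclideanSpace ℝ ι) (hS : S.PosDef) :
    multivariateGaussian m S =
      volume.withDensity fun x ↦ ENNReal.ofReal (multivariateGaussianPDFReal m S x) := by
  have hsqrt : CFC.sqrt S * (CFC.sqrt S)ᵀ = S := by
    have hsymm : (CFC.sqrt S)ᵀ = CFC.sqrt S := by
      simpa only [IsSelfAdjoint, star_eq_conjTranspose, conjTranspose_eq_transpose_of_trivial]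
        using (CFC.sqrt_nonneg S).isSelfAdjoint
    rw [hsymm, CFC.sqrt_mul_sqrt_self S hS.posSemidef.nonneg]
  have hdet : (CFC.sqrt S).det ≠ 0 := fun h ↦ hS.det_pos.ne' <| by
    rw [← hsqrt, det_mul, h, zero_mul]
  rw [multivariateGaussian, map_affine_stdGaussian_eq_withDensity hdet, hsqrt]

lemma det_one_add_mul_eq_det_inv_add_mul_det {R : Type*} [CommRing R] {M N : Matrix ι ι R}
    (hN : IsUnit N.det) : (1 + M * N).det = (N⁻¹ + M).det * N.det := by
  rw [← det_mul, add_mul, nonsing_inv_mul _ hN]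

lemma det_one_add_two_smul_mul_pos (hS : S.PosDef) (hT : (S⁻¹ + (2 : ℝ) • T).PosDef) :
    0 < (1 + (2 : ℝ) • (T * S)).det := by
  rw [← smul_mul_assoc, det_one_add_mul_eq_det_inv_add_mul_det hS.det_pos.ne'.isUnit]
  exact mul_pos hT.det_pos hS.det_pos

lemma exp_neg_mul_multivariateGaussianPDFReal (hS : S.PosDef)
    (hT : (S⁻¹ + (2 : ℝ) • T).PosDef) (x : EuclideanSpace ℝ ι) :
    Real.exp (-(x.ofLp ⬝ᵥ T *ᵥ x.ofLp)) * multivariateGaussianPDFReal 0 S x =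
      (1 + (2 : ℝ) • (T * S)).det ^ (-(1 : ℝ) / 2) *
        multivariateGaussianPDFReal 0 (S⁻¹ + (2 : ℝ) • T)⁻¹ x := by
  set Q := S⁻¹ + (2 : ℝ) • T with hQ
  have hSdet := hS.det_pos
  have hQdet := hT.det_pos
  have hdet : (1 + (2 : ℝ) • (T * S)).det = Q.det * S.det := by
    rw [← smul_mul_assoc, det_one_add_mul_eq_det_inv_add_mul_det hSdet.ne'.isUnit]
  have hrpow : (Q.det * S.det) ^ (-(1 : ℝ) / 2) = (√Q.det * √S.det)⁻¹ := by
    rw [neg_div, Real.rpow_neg (by positivity), ← Real.sqrt_eq_rpow, Real.sqrt_mul hQdet.le]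
  have hexp : Real.exp (-(x.ofLp ⬝ᵥ T *ᵥ x.ofLp)) *
      Real.exp (-(x.ofLp ⬝ᵥ S⁻¹ *ᵥ x.ofLp) / 2) = Real.exp (-(x.ofLp ⬝ᵥ Q *ᵥ x.ofLp) / 2) := by
    rw [← Real.exp_add, hQ, add_mulVec, smul_mulVec, dotProduct_add, dotProduct_smul, smul_eq_mul]
    ring_nf
  simp only [multivariateGaussianPDFReal, sub_zero]
  rw [mul_left_comm, hexp, hdet, hrpow, nonsing_inv_nonsing_inv _ hQdet.ne'.isUnit,
    det_nonsing_inv, Ring.inverse_eq_inv', Real.sqrt_inv]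
  field_simp

lemma multivariateGaussian_withDensity_exp_neg_quadratic (hS : S.PosDef)
    (hT : (S⁻¹ + (2 : ℝ) • T).PosDef) :
    (multivariateGaussian 0 S).withDensity
        (fun x ↦ ENNReal.ofReal (Real.exp (-(x.ofLp ⬝ᵥ T *ᵥ x.ofLp)))) =
      ENNReal.ofReal ((1 + (2 : ℝ) • (T * S)).det ^ (-(1 : ℝ) / 2)) •
        multivariateGaussian 0 (S⁻¹ + (2 : ℝ) • T)⁻¹ := by
  have hpdf (R : Matrix ι ι ℝ) :
      Measurable fun x ↦ ENNReal.ofReal (multivariateGaussianPDFReal 0 R x) :=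
    (measurable_multivariateGaussianPDFReal 0 R).ennreal_ofReal
  have hweight : Measurable fun x : EuclideanSpace ℝ ι ↦
      ENNReal.ofReal (Real.exp (-(x.ofLp ⬝ᵥ T *ᵥ x.ofLp))) :=
    (measurable_ofReal_exp_neg_dotProduct_mulVec_self T).comp (by fun_prop)
  have hdet : 0 ≤ (1 + (2 : ℝ) • (T * S)).det ^ (-(1 : ℝ) / 2) :=
    Real.rpow_nonneg (det_one_add_two_smul_mul_pos hS hT).le _
  rw [multivariateGaussian_eq_withDensity 0 hS, multivariateGaussian_eq_withDensity 0 hT.inv,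
    ← withDensity_mul _ (hpdf S) hweight, ← withDensity_smul _ (hpdf _)]
  congr 1 with x
  simp only [Pi.mul_apply, Pi.smul_apply, smul_eq_mul]
  rw [mul_comm, ← ENNReal.ofReal_mul (by positivity), ← ENNReal.ofReal_mul hdet,
    exp_neg_mul_multivariateGaussianPDFReal hS hT]

lemma map_eq_map_ofLp_multivariateGaussian {Ω : Type*} [MeasurableSpace Ω] {μ : Measure Ω}
    [IsFiniteMeasure μ] (hS : S.PosSemidef) {X : Ω → ι → ℝ} (hXm : AEMeasurable X μ)
    (hX : ∀ u : ι → ℝ, ∫ ω, Complex.exp (Complex.I * ((u ⬝ᵥ X ω : ℝ) : ℂ)) ∂μ =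
      Complex.exp (-((u ⬝ᵥ S *ᵥ u : ℝ) : ℂ) / 2)) :
    μ.map X = (multivariateGaussian 0 S).map ofLp := by
  have hm : AEMeasurable (fun ω ↦ toLp 2 (X ω)) μ := by fun_prop
  have hlaw : μ.map (fun ω ↦ toLp 2 (X ω)) = multivariateGaussian 0 S := by
    refine Measure.ext_of_charFun (funext fun t ↦ ?_)
    have hinner (ω : Ω) : ⟪toLp 2 (X ω), t⟫ = t.ofLp ⬝ᵥ X ω := by
      simp [EuclideanSpace.inner_eq_star_dotProduct]
    rw [charFun_multivariateGaussian hS, charFun_apply, integral_map hm (by fun_prop)]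
    simp_rw [hinner, mul_comm _ Complex.I, hX]
    simp [neg_div]
  rw [← hlaw, AEMeasurable.map_map_of_aemeasurable (by fun_prop) hm]
  rfl

end MultivariateGaussian

section Tilt

variable {Ω Ω' ι F : Type*} [MeasurableSpace Ω] [MeasurableSpace Ω'] [Fintype ι] [DecidableEq ι]
  [NormedAddCommGroup F] [NormedSpace ℝ F] {μ : Measure Ω} [IsFiniteMeasure μ]
  {ν : Measure Ω'} [IsFiniteMeasure ν] {S T : Matrix ι ι ℝ} {X : Ω → ι → ℝ} {Y : Ω' → ι → ℝ}

lemma map_withDensity_exp_neg_quadratic (hS : S.PosDef) (hT : (S⁻¹ + (2 : ℝ) • T).PosDef)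
    (hXm : AEMeasurable X μ)
    (hX : ∀ u : ι → ℝ, ∫ ω, Complex.exp (Complex.I * ((u ⬝ᵥ X ω : ℝ) : ℂ)) ∂μ =
      Complex.exp (-((u ⬝ᵥ S *ᵥ u : ℝ) : ℂ) / 2))
    (hYm : AEMeasurable Y ν)
    (hY : ∀ u : ι → ℝ, ∫ ω, Complex.exp (Complex.I * ((u ⬝ᵥ Y ω : ℝ) : ℂ)) ∂ν =
      Complex.exp (-((u ⬝ᵥ (S⁻¹ + (2 : ℝ) • T)⁻¹ *ᵥ u : ℝ) : ℂ) / 2)) :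
    (μ.map X).withDensity (fun x ↦ ENNReal.ofReal (Real.exp (-(x ⬝ᵥ T *ᵥ x)))) =
      ENNReal.ofReal ((1 + (2 : ℝ) • (T * S)).det ^ (-(1 : ℝ) / 2)) • ν.map Y := by
  rw [map_eq_map_ofLp_multivariateGaussian hS.posSemidef hXm hX,
    map_eq_map_ofLp_multivariateGaussian hT.inv.posSemidef hYm hY, ← Measure.map_smul,
    ← multivariateGaussian_withDensity_exp_neg_quadratic hS hT,
    ← map_withDensity_comp _ (by fun_prop) (measurable_ofReal_exp_neg_dotProduct_mulVec_self T)]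
  rfl

theorem gaussian_tilt_formula_general (hS : S.PosDef) (hT : (S⁻¹ + (2 : ℝ) • T).PosDef)
    (hXm : AEMeasurable X μ)
    (hX : ∀ u : ι → ℝ, ∫ ω, Complex.exp (Complex.I * ((u ⬝ᵥ X ω : ℝ) : ℂ)) ∂μ =
      Complex.exp (-((u ⬝ᵥ S *ᵥ u : ℝ) : ℂ) / 2))
    (hYm : AEMeasurable Y ν)
    (hY : ∀ u : ι → ℝ, ∫ ω, Complex.exp (Complex.I * ((u ⬝ᵥ Y ω : ℝ) : ℂ)) ∂ν =
      Complex.exp (-((u ⬝ᵥ (S⁻¹ + (2 : ℝ) • T)⁻¹ *ᵥ u : ℝ) : ℂ) / 2))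
    {g : (ι → ℝ) → F} (hg : Integrable g (ν.map Y)) :
    Integrable (fun ω ↦ Real.exp (-(X ω ⬝ᵥ T *ᵥ X ω)) • g (X ω)) μ ∧
      ∫ ω, Real.exp (-(X ω ⬝ᵥ T *ᵥ X ω)) • g (X ω) ∂μ =
        (1 + (2 : ℝ) • (T * S)).det ^ (-(1 : ℝ) / 2) • ∫ ω, g (Y ω) ∂ν := by
  have htilt := map_withDensity_exp_neg_quadratic hS hT hXm hX hYm hY
  have hweight := measurable_ofReal_exp_neg_dotProduct_mulVec_self T
  have hint : Integrable (fun x ↦ Real.exp (-(x ⬝ᵥ T *ᵥ x)) • g x) (μ.map X) := by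
    have h := htilt ▸ hg.smul_measure ENNReal.ofReal_ne_top
    rw [integrable_withDensity_iff_integrable_smul' hweight (by simp)] at h
    simpa only [ENNReal.toReal_ofReal (Real.exp_pos _).le] using h
  refine ⟨hint.comp_aemeasurable hXm, ?_⟩
  calc ∫ ω, Real.exp (-(X ω ⬝ᵥ T *ᵥ X ω)) • g (X ω) ∂μ
      = ∫ x, Real.exp (-(x ⬝ᵥ T *ᵥ x)) • g x ∂μ.map X :=
        (integral_map hXm hint.aestronglyMeasurable).symm
    _ = ∫ x, g x ∂(μ.map X).withDensity
          (fun x ↦ ENNReal.ofReal (Real.exp (-(x ⬝ᵥ T *ᵥ x)))) := by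
        rw [integral_withDensity_eq_integral_toReal_smul hweight (by simp)]
        simp only [ENNReal.toReal_ofReal (Real.exp_pos _).le]
    _ = (1 + (2 : ℝ) • (T * S)).det ^ (-(1 : ℝ) / 2) • ∫ ω, g (Y ω) ∂ν := by
        rw [htilt, integral_smul_measure, integral_map hYm hg.aestronglyMeasurable,
          ENNReal.toReal_ofReal (Real.rpow_nonneg (det_one_add_two_smul_mul_pos hS hT).le _)]

end Tilt

theorem gaussian_tilt_formula
    {Ω Ω' : Type*} [MeasurableSpace Ω] [MeasurableSpace Ω']
    (μ : Measure Ω) [IsProbabilityMeasure μ] (ν : Measure Ω') [IsProbabilityMeasure ν]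
    {n : ℕ} (S : Matrix (Fin n) (Fin n) ℝ) (hpd : S.PosDef)
    (d : Fin n → ℝ) (hd : ∀ i, 0 ≤ d i)
    (X : Ω → (Fin n → ℝ)) (hXm : Measurable X)
    (hX : ∀ u : Fin n → ℝ,
      ∫ ω, Complex.exp (Complex.I * ((u ⬝ᵥ X ω : ℝ) : ℂ)) ∂μ =
        Complex.exp (-(((u ⬝ᵥ S *ᵥ u : ℝ) : ℂ)) / 2))
    (Y : Ω' → (Fin n → ℝ)) (hYm : Measurable Y)
    (hY : ∀ u : Fin n → ℝ,
      ∫ ω', Complex.exp (Complex.I * ((u ⬝ᵥ Y ω' : ℝ) : ℂ)) ∂ν =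
        Complex.exp
          (-(((u ⬝ᵥ (S⁻¹ + (2 : ℝ) • Matrix.diagonal d)⁻¹ *ᵥ u : ℝ) : ℂ)) / 2))
    (g : (Fin n → ℝ) → ℝ) (hg : Measurable g) (C : ℝ) (hgC : ∀ x, |g x| ≤ C) :
    ∫ ω, Real.exp (-(X ω ⬝ᵥ Matrix.diagonal d *ᵥ X ω)) * g (X ω) ∂μ =
      ((1 : Matrix (Fin n) (Fin n) ℝ) + (2 : ℝ) • (Matrix.diagonal d * S)).det ^
          (-(1 : ℝ) / 2) *
        ∫ ω', g (Y ω') ∂ν := by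
  have hT : (S⁻¹ + (2 : ℝ) • diagonal d).PosDef :=
    hpd.inv.add_posSemidef ((PosSemidef.diagonal hd).smul zero_le_two)
  have : IsProbabilityMeasure (ν.map Y) := Measure.isProbabilityMeasure_map hYm.aemeasurable
  exact (gaussian_tilt_formula_general hpd hT hXm.aemeasurable hX hYm.aemeasurable hY
    (.of_bound hg.aestronglyMeasurable C (.of_forall hgC))).2
end
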